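/- Let d ≥ 3 be an integer, q a prime power, and Δ = q³(q^{d−2} − 1)/(q − 1). Then there exists a finite simple graph Γ which is arc-transitive, regular of degree Δ, has diameter at most 2, and whose number of vertices is at least Δ^{2−3/d} + 2Δ^{1−1/d} + Δ^{1−2/d} + 3 (real powers). -/

import Mathlib

open Real

/-- A graph is arc-transitive if its automorphism group acts transitively on the set of
arcs (ordered pairs of adjacent vertices). -/
def SimpleGraph.IsArcTransitive {V : Type*} (G : SimpleGraph V) : Prop :=
  ∀ u v x y : V, G.Adj u v → G.Adj x y → ∃ φ : G ≃g G, φ u = x ∧ φ v = y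

namespace FlagGraph
open Submodule

variable {F W : Type} [Field F] [AddCommGroup W] [Module F W]

/-- Two vectors spanning a flag. -/
def Flag (F W : Type) [Field F] [AddCommGroup W] [Module F W] : Type :=
  {x : Submodule F W × Submodule F W //
    ∃ v w, LinearIndependent F ![v, w] ∧ x.1 = span F {v} ∧ x.2 = span F {v, w}}

def mk (v w : W) (h : LinearIndependent F ![v, w]) : Flag F W :=
  ⟨(span F {v}, span F {v, w}), v, w, h, rfl, rfl⟩

def graph (F W : Type) [Field F] [AddCommGroup W] [Module F W] : SimpleGraph (Flag F W) where
  Adj x y := x.1.2 ≠ y.1.2 ∧ ∃ z, z ∈ x.1.2 ∧ z ∈ y.1.2 ∧ z ∉ x.1.1 ∧ z ∉ y.1.1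
  symm := ⟨fun x y h => by
    obtain ⟨h, z, h1, h2, h3, h4⟩ := h
    exact ⟨h.symm, z, h2, h1, h4, h3⟩⟩
  loopless := ⟨fun x h => h.1 rfl⟩

lemma pair_iff {v w : W} : LinearIndependent F ![v, w] ↔ v ≠ 0 ∧ w ∉ span F {v} := by
  constructor
  · intro h
    have hv : v ≠ 0 := h.ne_zero (0 : Fin 2)
    refine ⟨hv, fun hw => ?_⟩
    obtain ⟨a, ha⟩ := mem_span_singleton.1 hw
    exact (LinearIndependent.pair_iff' hv).1 h a ha
  · rintro ⟨hv, hw⟩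
    rw [LinearIndependent.pair_iff' hv]
    intro a ha
    exact hw (mem_span_singleton.2 ⟨a, ha⟩)

/-- change of the second vector -/
lemma pair_change {v w z : W} (h : LinearIndependent F ![v, w]) (hz : z ∈ span F {v, w})
    (hz' : z ∉ span F {v}) :
    LinearIndependent F ![v, z] ∧ span F {v, w} = span F {v, z} := by
  refine ⟨pair_iff.2 ⟨(pair_iff.1 h).1, hz'⟩, ?_⟩
  obtain ⟨a, b, hab⟩ := mem_span_pair.1 hz
  have hb : b ≠ 0 := by
    rintro rfl
    exact hz' (mem_span_singleton.2 ⟨a, by simpa using hab⟩)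
  apply le_antisymm
  · rw [span_le]
    rintro t (rfl | rfl)
    · exact subset_span (by simp)
    · refine mem_span_pair.2 ⟨-(b⁻¹ * a), b⁻¹, ?_⟩
      rw [← hab, smul_add, smul_smul, smul_smul, inv_mul_cancel₀ hb, neg_smul]
      simp
  · rw [span_le]
    rintro t (rfl | rfl)
    · exact subset_span (by simp)
    · exact hz

lemma finrank_pair {v w : W} (h : LinearIndependent F ![v, w]) :
    Module.finrank F (span F {v, w}) = 2 := by
  have := finrank_span_eq_card h
  rw [Matrix.range_cons_cons_empty] at this
  simpa using this

lemma triple_iff {v w u : W} (h : LinearIndependent F ![v, w]) (hu : u ∉ span F {v, w}) :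
    LinearIndependent F ![v, w, u] := by
  rw [Fintype.linearIndependent_iff]
  intro g hg
  simp only [Fin.sum_univ_three, Matrix.cons_val] at hg
  have h2 : g 2 = 0 := by
    by_contra h2
    apply hu
    refine mem_span_pair.2 ⟨-((g 2)⁻¹ * g 0), -((g 2)⁻¹ * g 1), ?_⟩
    have : u = (g 2)⁻¹ • (g 2 • u) := by rw [smul_smul, inv_mul_cancel₀ h2, one_smul]
    rw [this, eq_neg_of_add_eq_zero_right hg]
    module
  rw [h2, zero_smul, add_zero] at hg
  obtain ⟨h0, h1⟩ := LinearIndependent.pair_iff.1 h _ _ hg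
  intro i
  fin_cases i <;> simp [*]

lemma exists_equiv [FiniteDimensional F W] {a b : Fin 3 → W} (ha : LinearIndependent F a)
    (hb : LinearIndependent F b) : ∃ g : W ≃ₗ[F] W, ∀ i, g (a i) = b i := by
  let f := (Module.Basis.span ha).equiv (Module.Basis.span hb) (Equiv.refl _)
  obtain ⟨g, hg⟩ := Submodule.exists_linearEquiv_restrict_eq f
  refine ⟨g, fun i => ?_⟩
  have h1 := hg (Module.Basis.span ha i)
  have h2 : f (Module.Basis.span ha i) = Module.Basis.span hb i := by
    simp only [f, Module.Basis.equiv_apply, Equiv.refl_apply]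
  rw [h2] at h1
  simpa [Module.Basis.span_apply] using h1.symm

/-- Normal form of adjacency -/
lemma adj_form [FiniteDimensional F W] {x y : Flag F W} (h : (graph F W).Adj x y) :
    ∃ v z u, LinearIndependent F ![v, z, u] ∧ x.1.1 = span F {v} ∧ x.1.2 = span F {v, z} ∧
      y.1.1 = span F {u} ∧ y.1.2 = span F {u, z} := by
  obtain ⟨hne, z, h1, h2, h3, h4⟩ := h
  obtain ⟨v, w, hvw, hx1, hx2⟩ := x.2
  obtain ⟨u, w', huw, hy1, hy2⟩ := y.2
  rw [hx1] at h3
  rw [hy1] at h4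
  rw [hx2] at h1
  rw [hy2] at h2
  obtain ⟨a1, a2⟩ := pair_change hvw h1 h3
  obtain ⟨b1, b2⟩ := pair_change huw h2 h4
  refine ⟨v, z, u, triple_iff a1 ?_, hx1, hx2.trans a2, hy1, hy2.trans b2⟩
  intro hu
  apply hne
  rw [hx2, hy2, a2, b2]
  symm
  apply Submodule.eq_of_le_of_finrank_eq
  · rw [span_le]
    rintro t (rfl | rfl)
    · exact hu
    · exact subset_span (by simp)
  · rw [finrank_pair a1, finrank_pair b1]

def flagMap (g : W ≃ₗ[F] W) (x : Flag F W) : Flag F W :=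
  ⟨(x.1.1.map g.toLinearMap, x.1.2.map g.toLinearMap), by
    obtain ⟨v, w, h, h1, h2⟩ := x.2
    refine ⟨g v, g w, ?_, ?_, ?_⟩
    · have := h.map' g.toLinearMap g.ker
      have e : (⇑g.toLinearMap ∘ ![v, w]) = ![g v, g w] := by
        ext i
        fin_cases i <;> rfl
      rwa [e] at this
    · simp [h1, map_span]
    · simp [h2, map_span, Set.image_pair]⟩

lemma flagMap_flagMap (g k : W ≃ₗ[F] W) (hgk : ∀ t, k (g t) = t) (x : Flag F W) :
    flagMap k (flagMap g x) = x := by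
  have : ∀ p : Submodule F W, (p.map g.toLinearMap).map k.toLinearMap = p := by
    intro p
    rw [← Submodule.map_comp]
    have e : k.toLinearMap ∘ₗ g.toLinearMap = LinearMap.id := by
      ext t
      exact hgk t
    rw [e, Submodule.map_id]
  apply Subtype.ext
  apply Prod.ext
  · exact this _
  · exact this _

lemma adj_map (g : W ≃ₗ[F] W) {x y : Flag F W} (h : (graph F W).Adj x y) :
    (graph F W).Adj (flagMap g x) (flagMap g y) := by
  obtain ⟨hne, z, h1, h2, h3, h4⟩ := h
  refine ⟨fun h => hne (Submodule.map_injective_of_injective g.injective h), g z, ?_, ?_, ?_, ?_⟩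
  · exact mem_map_of_mem h1
  · exact mem_map_of_mem h2
  · rintro ⟨t, ht, e⟩
    exact h3 (g.injective e ▸ ht)
  · rintro ⟨t, ht, e⟩
    exact h4 (g.injective e ▸ ht)

def auto (g : W ≃ₗ[F] W) : graph F W ≃g graph F W where
  toFun := flagMap g
  invFun := flagMap g.symm
  left_inv := flagMap_flagMap g g.symm (by simp)
  right_inv := flagMap_flagMap g.symm g (by simp)
  map_rel_iff' := by
    intro x y
    refine ⟨fun h => ?_, adj_map g⟩
    have := adj_map g.symm h
    simpa [flagMap_flagMap g g.symm (by simp)] using this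

lemma arcTransitive [FiniteDimensional F W] : (graph F W).IsArcTransitive := by
  intro x y x' y' h h'
  obtain ⟨v, z, u, hl, h1, h2, h3, h4⟩ := adj_form h
  obtain ⟨v', z', u', hl', h1', h2', h3', h4'⟩ := adj_form h'
  obtain ⟨g, hg⟩ := exists_equiv hl hl'
  have g0 : g v = v' := hg 0
  have g1 : g z = z' := hg 1
  have g2 : g u = u' := hg 2
  refine ⟨auto g, Subtype.ext (Prod.ext ?_ ?_), Subtype.ext (Prod.ext ?_ ?_)⟩
  · change x.1.1.map g.toLinearMap = _
    simp [h1, h1', map_span, g0]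
  · change x.1.2.map g.toLinearMap = _
    simp [h2, h2', map_span, Set.image_pair, g0, g1]
  · change y.1.1.map g.toLinearMap = _
    simp [h3, h3', map_span, g2]
  · change y.1.2.map g.toLinearMap = _
    simp [h4, h4', map_span, Set.image_pair, g1, g2]

lemma avoid_two {L A B : Submodule F W} (hA : ¬ L ≤ A) (hB : ¬ L ≤ B) :
    ∃ z ∈ L, z ∉ A ∧ z ∉ B := by
  obtain ⟨a, haL, haA⟩ := SetLike.not_le_iff_exists.1 hA
  obtain ⟨b, hbL, hbB⟩ := SetLike.not_le_iff_exists.1 hB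
  by_cases h1 : a ∈ B
  · by_cases h2 : b ∈ A
    · refine ⟨a + b, L.add_mem haL hbL, fun h => haA ?_, fun h => hbB ?_⟩
      · exact (A.add_mem_iff_left h2).1 h
      · exact (B.add_mem_iff_right h1).1 h
    · exact ⟨b, hbL, h2, hbB⟩
  · exact ⟨a, haL, haA, h1⟩

lemma line_not_le (x : Flag F W) : ¬ x.1.2 ≤ x.1.1 := by
  obtain ⟨v, w, h, h1, h2⟩ := x.2
  intro hle
  rw [h1, h2] at hle
  exact (pair_iff.1 h).2 (hle (subset_span (by simp)))

lemma finrank_line (x : Flag F W) : Module.finrank F x.1.2 = 2 := by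
  obtain ⟨v, w, h, h1, h2⟩ := x.2
  rw [h2, finrank_pair h]

lemma common [FiniteDimensional F W] (hd : 3 ≤ Module.finrank F W) (x y : Flag F W) :
    ∃ m, (graph F W).Adj x m ∧ (graph F W).Adj m y := by
  by_cases hL : x.1.2 = y.1.2
  · obtain ⟨z, hz, hz1, hz2⟩ := avoid_two (line_not_le x) (hL ▸ line_not_le y)
    have hne : x.1.2 ≠ ⊤ := by
      intro h
      have h2 := finrank_line x
      rw [h, finrank_top] at h2
      omega
    obtain ⟨u, -, hu⟩ := SetLike.not_le_iff_exists.1 (fun h => hne (top_le_iff.1 h))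
    have hu0 : u ≠ 0 := fun h => hu (h ▸ Submodule.zero_mem _)
    have hz0 : z ≠ 0 := fun h => hz1 (h ▸ Submodule.zero_mem _)
    have hzu : z ∉ span F {u} := by
      intro h
      obtain ⟨a, ha⟩ := mem_span_singleton.1 h
      have : a ≠ 0 := by
        rintro rfl
        exact hz0 (by simpa using ha.symm)
      apply hu
      rwa [← ha, Submodule.smul_mem_iff _ this] at hz
    have hin : u ∈ (mk u z (pair_iff.2 ⟨hu0, hzu⟩) : Flag F W).1.2 := subset_span (by simp)
    have hin' : z ∈ (mk u z (pair_iff.2 ⟨hu0, hzu⟩) : Flag F W).1.2 := subset_span (by simp)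
    refine ⟨mk u z (pair_iff.2 ⟨hu0, hzu⟩), ⟨fun h => hu (h ▸ hin), z, hz, hin', hz1, hzu⟩,
      ⟨fun h => hu (hL ▸ h ▸ hin), z, hin', hL ▸ hz, hzu, hz2⟩⟩
  · have hxy : ¬ x.1.2 ≤ y.1.2 := fun h => hL
      (Submodule.eq_of_le_of_finrank_eq h (by rw [finrank_line, finrank_line]))
    have hyx : ¬ y.1.2 ≤ x.1.2 := fun h => hL
      (Submodule.eq_of_le_of_finrank_eq h (by rw [finrank_line, finrank_line])).symm
    obtain ⟨z, hz, hz1, hz2⟩ := avoid_two (line_not_le x) hxy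
    obtain ⟨t, ht, ht1, ht2⟩ := avoid_two (line_not_le y) hyx
    have hz0 : z ≠ 0 := fun h => hz1 (h ▸ Submodule.zero_mem _)
    have ht0 : t ≠ 0 := fun h => ht1 (h ▸ Submodule.zero_mem _)
    have hs0 : z + t ≠ 0 := fun h => ht2 (by
      rw [eq_neg_of_add_eq_zero_right h]
      exact Submodule.neg_mem _ hz)
    have hzs : z ∉ span F {z + t} := by
      intro h
      obtain ⟨a, ha⟩ := mem_span_singleton.1 h
      have ha0 : a ≠ 0 := by
        rintro rfl
        exact hz0 (by simpa using ha.symm)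
      have hz' := hz
      rw [← ha, Submodule.smul_mem_iff _ ha0, Submodule.add_mem_iff_right _ hz] at hz'
      exact ht2 hz'
    have hts : t ∉ span F {z + t} := by
      intro h
      apply hzs
      have := Submodule.sub_mem _ (mem_span_singleton_self (R := F) (z + t)) h
      simpa using this
    have hli : LinearIndependent F ![z + t, z] := pair_iff.2 ⟨hs0, hzs⟩
    have hin : z ∈ (mk (z + t) z hli : Flag F W).1.2 := subset_span (by simp)
    have hin' : t ∈ (mk (z + t) z hli : Flag F W).1.2 := by
      have h1 : z + t ∈ (mk (z + t) z hli : Flag F W).1.2 := subset_span (by simp)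
      have := Submodule.sub_mem _ h1 hin
      simpa using this
    refine ⟨mk (z + t) z hli, ⟨fun h => ht2 (h ▸ hin'), z, hz, hin, hz1, hzs⟩,
      ⟨fun h => hz2 (h ▸ hin), t, hin', ht, hts, ht1⟩⟩

lemma card_fibres {α β : Type} [Finite α] (f : α → β) (n : ℕ)
    (h : ∀ a, Nat.card {a' // f a' = f a} = n) : Nat.card α = n * (Set.range f).ncard := by
  classical
  have := Fintype.ofFinite α
  have e := Finset.card_eq_sum_card_fiberwise (s := Finset.univ) (t := Finset.univ.image f) (f := f)
    (by intro a _; simp)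
  rw [Finset.card_univ, ← Nat.card_eq_fintype_card] at e
  rw [e, Finset.sum_const_nat (m := n), mul_comm]
  · congr 1
    rw [← Set.ncard_coe_finset]
    simp
  · intro b hb
    obtain ⟨a, -, rfl⟩ := Finset.mem_image.1 hb
    rw [← h a, Nat.card_eq_fintype_card, Fintype.card_subtype]

lemma card_fibres_le {α β : Type} [Finite α] [Finite β] (f : α → β) (n : ℕ)
    (h : ∀ a, Nat.card {a' // f a' = f a} ≤ n) : Nat.card α ≤ n * Nat.card β := by
  classical
  have := Fintype.ofFinite α
  have := Fintype.ofFinite β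
  have e := Finset.card_le_mul_card_image (f := f) Finset.univ n (by
    intro b hb
    obtain ⟨a, -, rfl⟩ := Finset.mem_image.1 hb
    have := h a
    rwa [Nat.card_eq_fintype_card, Fintype.card_subtype] at this)
  rw [Nat.card_eq_fintype_card, Nat.card_eq_fintype_card]
  exact e.trans (Nat.mul_le_mul_left _ (Finset.card_le_univ _))

lemma nbr_li {v w u : W} (h : LinearIndependent F ![v, w]) (hu : u ∉ span F {v, w}) (a : F) :
    LinearIndependent F ![u, w + a • v] := by
  refine pair_iff.2 ⟨fun h => hu (h ▸ Submodule.zero_mem _), fun h' => ?_⟩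
  obtain ⟨c, hc⟩ := mem_span_singleton.1 h'
  have h3 := LinearIndependent.pair_iff.1 h
  by_cases hc0 : c = 0
  · have := h3 a 1 (by rw [one_smul, add_comm, ← hc, hc0, zero_smul])
    simp at this
  · apply hu
    rw [← Submodule.smul_mem_iff _ hc0, hc]
    exact mem_span_pair.2 ⟨a, 1, by module⟩

lemma card_nbr [Finite F] [FiniteDimensional F W] (x : Flag F W) :
    Nat.card F * (Nat.card F ^ Module.finrank F W - Nat.card F ^ 2) =
      (Nat.card F - 1) * ((graph F W).neighborSet x).ncard := by
  classical
  have := Fintype.ofFinite F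
  have : Finite W := Module.finite_of_finite F
  have := Fintype.ofFinite W
  obtain ⟨v, w, h, h1, h2⟩ := x.2
  let f : F × {u // u ∉ span F {v, w}} → Flag F W := fun p =>
    mk p.2.1 (w + p.1 • v) (nbr_li h p.2.2 p.1)
  have hr : Set.range f = (graph F W).neighborSet x := by
    ext y
    constructor
    · rintro ⟨⟨a, u, hu⟩, rfl⟩
      refine ⟨fun e => ?_, w + a • v, ?_, ?_, ?_, ?_⟩
      · have : u ∈ (f (a, ⟨u, hu⟩)).1.2 := subset_span (by simp)
        rw [← e, h2] at this
        exact hu this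
      · rw [h2]
        exact mem_span_pair.2 ⟨a, 1, by module⟩
      · exact subset_span (by simp)
      · rw [h1]
        intro h'
        apply (pair_iff.1 h).2
        rwa [Submodule.add_mem_iff_left] at h'
        exact mem_span_singleton.2 ⟨a, rfl⟩
      · exact (pair_iff.1 (nbr_li h hu a)).2
    · intro hy
      obtain ⟨v', z, u, hl, k1, k2, k3, k4⟩ := adj_form hy
      have hz : z ∈ span F {v, w} := by
        rw [← h2, k2]
        exact subset_span (by simp)
      have hzv : z ∉ span F {v} := by
        rw [← h1, k1]
        intro hh
        obtain ⟨c, hc⟩ := mem_span_singleton.1 hh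
        have := Fintype.linearIndependent_iff.1 hl ![c, -1, 0]
          (by simp [Fin.sum_univ_three, hc]) 1
        simp at this
      have hu : u ∉ span F {v, w} := by
        rw [← h2, k2]
        intro hh
        obtain ⟨c, c', hc⟩ := mem_span_pair.1 hh
        have := Fintype.linearIndependent_iff.1 hl ![c, c', -1]
          (by simp [Fin.sum_univ_three, hc]) 2
        simp at this
      obtain ⟨a, b, hab⟩ := mem_span_pair.1 hz
      have hb : b ≠ 0 := by
        rintro rfl
        exact hzv (mem_span_singleton.2 ⟨a, by simpa using hab⟩)
      refine ⟨(b⁻¹ * a, ⟨u, hu⟩), Subtype.ext (Prod.ext k3.symm ?_)⟩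
      rw [k4]
      change span F {u, w + (b⁻¹ * a) • v} = _
      have hz2 : w + (b⁻¹ * a) • v = b⁻¹ • z := by
        rw [← hab, smul_add, smul_smul, smul_smul, inv_mul_cancel₀ hb, one_smul, add_comm]
      rw [hz2, span_insert, span_insert]
      congr 1
      exact span_singleton_smul_eq (IsUnit.mk0 _ (inv_ne_zero hb)) z
  have hf : ∀ p, Nat.card {p' // f p' = f p} = Nat.card F - 1 := by
    rintro ⟨a, u, hu⟩
    have hu0 : u ≠ 0 := fun h => hu (h ▸ Submodule.zero_mem _)
    have hc : ∀ c : Fˣ, c • u ∉ span F {v, w} := fun c hh => hu (by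
      rwa [Units.smul_def, Submodule.smul_mem_iff _ c.ne_zero] at hh)
    let k : Fˣ → {p' // f p' = f (a, ⟨u, hu⟩)} := fun c => ⟨(a, ⟨c • u, hc c⟩), by
      have e : span F {c • u} = span F {u} := span_singleton_group_smul_eq F c u
      refine Subtype.ext (Prod.ext e ?_)
      change span F {c • u, w + a • v} = span F {u, w + a • v}
      rw [span_insert, span_insert, e]⟩
    have hk : Function.Bijective k := by
      constructor
      · intro c c' e
        have e' : c • u = c' • u := congrArg (fun t => t.1.2.1) e
        apply Units.ext
        exact smul_left_injective F hu0 e'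
      · rintro ⟨⟨a', u', hu'⟩, e⟩
        have e1 : span F {u'} = span F {u} := congrArg (fun t => t.1.1) e
        have e2 : span F {u', w + a' • v} = span F {u, w + a • v} := congrArg (fun t => t.1.2) e
        obtain ⟨c, hcu⟩ := Submodule.span_singleton_eq_span_singleton.1 e1.symm
        have hm : w + a' • v ∈ span F {u, w + a • v} := by
          rw [← e2]
          exact subset_span (by simp)
        obtain ⟨s, t, hst⟩ := mem_span_pair.1 hm
        have hs : s = 0 := by
          by_contra hs
          apply hu
          rw [← Submodule.smul_mem_iff _ hs, eq_sub_of_add_eq hst]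
          exact mem_span_pair.2 ⟨a' - t * a, 1 - t, by module⟩
        rw [hs] at hst
        obtain ⟨q1, q2⟩ := LinearIndependent.pair_iff.1 h (t * a - a') (t - 1) (by
          rw [← sub_eq_zero] at hst
          rw [← hst]
          module)
        have ht : t = 1 := sub_eq_zero.1 q2
        have haa : a = a' := by
          rw [ht, one_mul] at q1
          exact sub_eq_zero.1 q1
        subst haa
        subst hcu
        exact ⟨c, rfl⟩
    rw [← Nat.card_congr (Equiv.ofBijective k hk), Nat.card_eq_fintype_card, Fintype.card_units,
      Nat.card_eq_fintype_card]
  rw [← hr, ← card_fibres f _ hf, Nat.card_prod]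
  congr 1
  have c2 : Nat.card (span F {v, w}) = Nat.card F ^ 2 := by
    rw [Module.natCard_eq_pow_finrank (K := F), finrank_pair h]
  rw [← c2, ← Module.natCard_eq_pow_finrank (K := F) (V := W), Nat.card_eq_fintype_card,
    Nat.card_eq_fintype_card, Nat.card_eq_fintype_card, Fintype.card_subtype_compl]

lemma card_flag [Finite F] [FiniteDimensional F W] (hd : 3 ≤ Module.finrank F W) :
    (Nat.card F ^ Module.finrank F W - 1) * (Nat.card F ^ Module.finrank F W - Nat.card F) ≤
      ((Nat.card F - 1) * ((Nat.card F - 1) * Nat.card F)) * Nat.card (Flag F W) := by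
  classical
  have := Fintype.ofFinite F
  have : Finite W := Module.finite_of_finite F
  have := Fintype.ofFinite W
  have : Finite (Flag F W) := by unfold Flag; infer_instance
  have hc := card_linearIndependent (K := F) (V := W) (k := 2) (by omega)
  rw [Fin.prod_univ_two] at hc
  simp only [Fin.val_zero, Fin.val_one, pow_zero, pow_one, ← Nat.card_eq_fintype_card] at hc
  rw [← hc]
  have hs : ∀ s : Fin 2 → W, ![s 0, s 1] = s := by
    intro s
    ext i
    fin_cases i <;> rfl
  let f : {s : Fin 2 → W // LinearIndependent F s} → Flag F W := fun s =>
    mk (s.1 0) (s.1 1) (by rw [hs]; exact s.2)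
  apply card_fibres_le f
  rintro ⟨s, h⟩
  have h' : LinearIndependent F ![s 0, s 1] := by rwa [hs]
  have hu : Nat.card Fˣ = Nat.card F - 1 := by
    rw [Nat.card_eq_fintype_card, Fintype.card_units, Nat.card_eq_fintype_card]
  rw [← hu, ← Nat.card_prod, ← Nat.card_prod]
  have key : ∀ p : {p // f p = f ⟨s, h⟩}, ∃ c : Fˣ × Fˣ × F,
      p.1.1 0 = c.1 • s 0 ∧ p.1.1 1 = c.2.1 • s 1 + c.2.2 • s 0 := by
    rintro ⟨⟨s', hs'⟩, e⟩
    have hs'' : LinearIndependent F ![s' 0, s' 1] := by rwa [hs]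
    have e1 : span F {s' 0} = span F {s 0} := congrArg (fun t => t.1.1) e
    have e2 : span F {s' 0, s' 1} = span F {s 0, s 1} := congrArg (fun t => t.1.2) e
    obtain ⟨c, hc⟩ := Submodule.span_singleton_eq_span_singleton.1 e1.symm
    have hm : s' 1 ∈ span F {s 0, s 1} := by
      rw [← e2]
      exact subset_span (by simp)
    obtain ⟨a, b, hab⟩ := mem_span_pair.1 hm
    have hb : b ≠ 0 := by
      rintro rfl
      apply (pair_iff.1 hs'').2
      rw [e1]
      exact mem_span_singleton.2 ⟨a, by simpa using hab⟩
    refine ⟨(c, Units.mk0 b hb, a), hc.symm, ?_⟩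
    change s' 1 = b • s 1 + a • s 0
    rw [← hab, add_comm]
  choose k hk1 hk2 using key
  apply Nat.card_le_card_of_injective k
  intro p p' e
  apply Subtype.ext
  apply Subtype.ext
  funext i
  fin_cases i
  · change p.1.1 0 = p'.1.1 0
    rw [hk1, hk1, e]
  · change p.1.1 1 = p'.1.1 1
    rw [hk2, hk2, e]

lemma real_bound (d q G n : ℕ) (hd : 3 ≤ d) (hq : 2 ≤ q) (hG : q ^ (d - 2) = G * (q - 1) + 1)
    (hn : (q ^ 2 * G + q + 1) * (q * G + 1) ≤ n) :
    ((q ^ 3 * G : ℕ) : ℝ) ^ (2 - 3 / (d : ℝ)) + 2 * ((q ^ 3 * G : ℕ) : ℝ) ^ (1 - 1 / (d : ℝ)) +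
      ((q ^ 3 * G : ℕ) : ℝ) ^ (1 - 2 / (d : ℝ)) + 3 ≤ (n : ℝ) := by
  have hd0 : (0 : ℝ) < d := by exact_mod_cast (by omega : 0 < d)
  have hq0 : (0 : ℝ) < q := by exact_mod_cast (by omega : 0 < q)
  have hge : q ^ d ≤ q ^ 3 * G := by
    obtain ⟨e, rfl⟩ : ∃ e, d = e + 3 := ⟨d - 3, by omega⟩
    have h1 : q ^ e ≤ G := by
      by_contra hlt
      have hlt : G + 1 ≤ q ^ e := by omega
      have e1 : e + 3 - 2 = e + 1 := by omega
      rw [e1, pow_succ] at hG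
      obtain ⟨r, rfl⟩ : ∃ r, q = r + 1 := ⟨q - 1, by omega⟩
      simp only [Nat.add_sub_cancel] at hG
      have := Nat.mul_le_mul_right (r + 1) hlt
      nlinarith
    calc q ^ (e + 3) = q ^ 3 * q ^ e := by ring
      _ ≤ _ := Nat.mul_le_mul_left _ h1
  set D : ℝ := ((q ^ 3 * G : ℕ) : ℝ) with hD
  have hgeR : (q : ℝ) ^ d ≤ D := by rw [hD]; exact_mod_cast hge
  have hD0 : 0 < D := lt_of_lt_of_le (by positivity) hgeR
  have hs : (q : ℝ) ≤ D ^ (1 / (d : ℝ)) := by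
    calc (q : ℝ) = ((q : ℝ) ^ d) ^ (1 / (d : ℝ)) := by
          rw [← Real.rpow_natCast, ← Real.rpow_mul hq0.le, mul_one_div_cancel hd0.ne', Real.rpow_one]
      _ ≤ _ := Real.rpow_le_rpow (by positivity) hgeR (by positivity)
  have hk : ∀ k : ℕ, (q : ℝ) ^ k ≤ D ^ ((k : ℝ) / d) := by
    intro k
    have : D ^ ((k : ℝ) / d) = (D ^ (1 / (d : ℝ))) ^ k := by
      rw [← Real.rpow_natCast, ← Real.rpow_mul hD0.le]
      congr 1
      ring
    rw [this]
    exact pow_le_pow_left₀ hq0.le hs k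
  have hDD : D = q ^ 3 * G := by rw [hD]; push_cast; ring
  have b1 : D ^ (2 - 3 / (d : ℝ)) ≤ q ^ 3 * G ^ 2 := by
    rw [Real.rpow_sub hD0, div_le_iff₀ (by positivity)]
    calc D ^ (2 : ℝ) = q ^ 3 * G ^ 2 * q ^ 3 := by
          rw [Real.rpow_two, hDD]; ring
      _ ≤ _ := by
          apply mul_le_mul_of_nonneg_left _ (by positivity)
          exact_mod_cast hk 3
  have b2 : D ^ (1 - 1 / (d : ℝ)) ≤ q ^ 2 * G := by
    rw [Real.rpow_sub hD0, div_le_iff₀ (by positivity)]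
    calc D ^ (1 : ℝ) = q ^ 2 * G * q := by
          rw [Real.rpow_one, hDD]; ring
      _ ≤ _ := mul_le_mul_of_nonneg_left hs (by positivity)
  have b3 : D ^ (1 - 2 / (d : ℝ)) ≤ q * G := by
    rw [Real.rpow_sub hD0, div_le_iff₀ (by positivity)]
    calc D ^ (1 : ℝ) = q * G * q ^ 2 := by
          rw [Real.rpow_one, hDD]; ring
      _ ≤ _ := by
          apply mul_le_mul_of_nonneg_left _ (by positivity)
          exact_mod_cast hk 2
  have hnR : ((q : ℝ) ^ 2 * G + q + 1) * (q * G + 1) ≤ n := by exact_mod_cast hn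
  have hqR : (2 : ℝ) ≤ q := by exact_mod_cast hq
  nlinarith

end FlagGraph

open FlagGraph in
theorem arcTransitive_diameter_two_lower_bound_prime_power
    (d q : ℕ) (hd : 3 ≤ d) (hq : IsPrimePow q)
    (Δ : ℕ) (hΔ : Δ = q ^ 3 * (q ^ (d - 2) - 1) / (q - 1)) :
    ∃ (V : Type) (_ : Fintype V) (G : SimpleGraph V),
      G.IsArcTransitive ∧
      (∀ v : V, (G.neighborSet v).ncard = Δ) ∧
      G.Connected ∧ (∀ u v : V, G.dist u v ≤ 2) ∧
      (Δ : ℝ) ^ (2 - 3 / (d : ℝ)) + 2 * (Δ : ℝ) ^ (1 - 1 / (d : ℝ)) +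
          (Δ : ℝ) ^ (1 - 2 / (d : ℝ)) + 3 ≤ (Fintype.card V : ℝ) := by
  have hq2 : 2 ≤ q := hq.two_le
  obtain ⟨p, k, hp, hk, rfl⟩ := hq
  have : Fact p.Prime := ⟨hp.nat_prime⟩
  have hF : Nat.card (GaloisField p k) = p ^ k := GaloisField.card p k hk.ne'
  generalize p ^ k = q at *
  have hfin : Finite (GaloisField p k) := Nat.finite_of_card_ne_zero (by omega)
  have hdim : Module.finrank (GaloisField p k) (Fin d → GaloisField p k) = d := by simp
  obtain ⟨G, hG⟩ : ∃ G, q ^ (d - 2) = G * (q - 1) + 1 := by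
    refine ⟨∑ i ∈ Finset.range (d - 2), q ^ i, ?_⟩
    obtain ⟨r, rfl⟩ : ∃ r, q = r + 1 := ⟨q - 1, by omega⟩
    rw [Nat.add_sub_cancel, geom_sum_mul_add]
  have hpd : q ^ d = q ^ 2 * (G * (q - 1) + 1) := by
    rw [← hG, ← pow_add]
    congr 1
    omega
  have hΔ' : Δ = q ^ 3 * G := by
    rw [hΔ, hG, Nat.add_sub_cancel, ← mul_assoc]
    exact Nat.mul_div_cancel _ (by omega)
  have hFin : Finite (Flag (GaloisField p k) (Fin d → GaloisField p k)) := by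
    unfold FlagGraph.Flag
    infer_instance
  have hcard : (q ^ 2 * G + q + 1) * (q * G + 1) ≤
      Nat.card (Flag (GaloisField p k) (Fin d → GaloisField p k)) := by
    have h := card_flag (F := GaloisField p k) (W := Fin d → GaloisField p k) (by omega)
    rw [hF, hdim, hpd] at h
    obtain ⟨r, rfl⟩ : ∃ r, q = r + 1 := ⟨q - 1, by omega⟩
    simp only [Nat.add_sub_cancel] at h
    have e1 : (r + 1) ^ 2 * (G * r + 1) - 1 = ((r + 1) ^ 2 * G + (r + 1) + 1) * r := by
      apply Nat.sub_eq_of_eq_add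
      ring
    have e2 : (r + 1) ^ 2 * (G * r + 1) - (r + 1) = (r + 1) * ((r + 1) * G + 1) * r := by
      apply Nat.sub_eq_of_eq_add
      ring
    rw [e1, e2] at h
    have hr : 0 < r * (r * (r + 1)) := by
      have : 0 < r := by omega
      positivity
    refine Nat.le_of_mul_le_mul_left ?_ hr
    refine le_trans (le_of_eq ?_) h
    ring
  have hcom := common (F := GaloisField p k) (W := Fin d → GaloisField p k) (by omega)
  refine ⟨Flag (GaloisField p k) (Fin d → GaloisField p k), Fintype.ofFinite _,
    graph _ _, arcTransitive, ?_, ?_, ?_, ?_⟩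
  · intro x
    have h := card_nbr x
    rw [hF, hdim, hpd] at h
    rw [hΔ']
    have hr : 0 < q - 1 := by omega
    refine Nat.eq_of_mul_eq_mul_left hr ?_
    rw [← h, mul_add, mul_one, Nat.add_sub_cancel]
    ring
  · have : Nonempty (Flag (GaloisField p k) (Fin d → GaloisField p k)) := by
      refine (Nat.card_pos_iff.1 (lt_of_lt_of_le ?_ hcard)).1
      positivity
    refine ⟨fun x y => ?_⟩
    obtain ⟨m, h1, h2⟩ := hcom x y
    exact h1.reachable.trans h2.reachable
  · intro x y
    obtain ⟨m, h1, h2⟩ := hcom x y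
    exact SimpleGraph.dist_le (SimpleGraph.Walk.cons h1 (SimpleGraph.Walk.cons h2 .nil))
  · rw [hΔ', ← @Nat.card_eq_fintype_card _ (Fintype.ofFinite _)]
    exact real_bound d q G _ hd hq2 hG hcard
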